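/- Let p be an odd prime and let E_p be the elliptic curve over ℚ with Weierstrass equation y² = x³ + p·x. Then the quotient group E_p(ℚ)/2E_p(ℚ) is finite, and its order is at most 2 if p ≡ 7 or 11 (mod 16), at most 4 if p ≡ 3, 5, 13, or 15 (mod 16), and at most 8 if p ≡ 1 or 9 (mod 16). -/

import Mathlib

/-- The elliptic curve `E_p : y² = x³ + p·x` over `ℚ`, as an affine Weierstrass curve. -/
def EDcurve (D : ℚ) : WeierstrassCurve.Affine ℚ := ⟨0, 0, 0, D, 0⟩

/-- The subgroup `2·G` of an abelian group `G`, the image of multiplication by `2`. -/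
def twoSub (G : Type*) [AddCommGroup G] : AddSubgroup G := (2 • AddMonoidHom.id G).range

/-!
Write `E' : Y² = X³ - 4DX` for the curve 2-isogenous to `E : y² = x³ + Dx`. A rational point of `E`
with `x = r²` has the form `(r², rs)` with `s² = r⁴ + D`, and it is the image of the point of `E'`
with `X = 2(r² + s)`, `Y = 2rX` under the dual isogeny `E' → E`. If two such points have `X` in the
same square class, the sum of their preimages on `E'` is the image of a rational point `R` of `E`,
so that their own sum is `2R`; below this is an explicit computation with the line through them.

On either curve the `x`-coordinate of a rational point is, up to squares, a squarefree divisor of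
the coefficient of `x`. For `D = p` positivity leaves the classes `1` and `p` on `E`, which are
exchanged by adding `(0, 0)`; on `E'` the classes are the divisors of `2p`, which `s ↦ -s`
multiplies by `-p`, so that only `±1`, `±2` matter. Solvability of the quartic
`4p = d(dw⁴ - 4u²)` over `ℚ₂` restricts `d` further.
-/

section Arithmetic

lemma exists_int_eq_of_sq_eq {z : ℚ} {n : ℤ} (h : z ^ 2 = n) : ∃ k : ℤ, z = k := by
  obtain ⟨k, hk⟩ := IsIntegrallyClosed.exists_algebraMap_eq_of_isIntegral_pow (R := ℤ) two_pos
    (h ▸ isIntegral_algebraMap : IsIntegral ℤ (z ^ 2))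
  exact ⟨k, hk.symm⟩

lemma exists_int_eq_of_squarefree_mul_sq_eq {t n : ℤ} (ht : Squarefree t) {z : ℚ}
    (h : t * z ^ 2 = n) : ∃ k : ℤ, z = k := by
  obtain ⟨k, hk⟩ := exists_int_eq_of_sq_eq (z := t * z) (n := t * n) (by
    push_cast; rw [← h]; ring)
  have hk2 : k ^ 2 = t * n := by
    have : (k : ℚ) ^ 2 = t * n := by rw [← hk, ← h]; ring
    exact_mod_cast this
  obtain ⟨j, rfl⟩ := (ht.dvd_pow_iff_dvd two_ne_zero).mp ⟨n, hk2⟩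
  have ht0 : (t : ℚ) ≠ 0 := by exact_mod_cast ht.ne_zero
  exact ⟨j, mul_left_cancel₀ ht0 (by rw [hk]; push_cast; rfl)⟩

lemma exists_squarefree_mul_sq (m : ℤ) : ∃ d k : ℤ, Squarefree d ∧ m = d * k ^ 2 := by
  obtain ⟨a, b, hab, ha⟩ := Nat.sq_mul_squarefree m.natAbs
  have hab' : (m.natAbs : ℤ) = a * b ^ 2 := by rw [← hab]; push_cast; ring
  have ha' : Squarefree (a : ℤ) := Int.squarefree_natCast.mpr ha
  rcases Int.natAbs_eq m with hm | hm
  · exact ⟨a, b, ha', by rw [hm, hab']⟩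
  · exact ⟨-a, b, ha'.squarefree_of_dvd (neg_dvd.mpr dvd_rfl), by rw [hm, hab']; ring⟩

lemma exists_squarefree_dvd_of_mul_eq_sq {m v n : ℤ} (h : m * v = n ^ 2) :
    ∃ d k : ℤ, Squarefree d ∧ d ∣ v ∧ m = d * k ^ 2 := by
  obtain ⟨d, k, hd, rfl⟩ := exists_squarefree_mul_sq m
  rcases eq_or_ne k 0 with rfl | hk
  · exact ⟨1, 0, squarefree_one, one_dvd v, by simp⟩
  obtain ⟨j, rfl⟩ : k ∣ n := (Int.pow_dvd_pow_iff two_ne_zero).mp ⟨d * v, by rw [← h]; ring⟩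
  have hj : d * v = j ^ 2 := mul_left_cancel₀ (pow_ne_zero 2 hk) (by linear_combination h)
  obtain ⟨i, rfl⟩ : d ∣ j := (hd.dvd_pow_iff_dvd two_ne_zero).mp ⟨v, hj.symm⟩
  have hv : v = d * i ^ 2 := mul_left_cancel₀ hd.ne_zero (by rw [hj]; ring)
  exact ⟨d, k, hd, ⟨i ^ 2, hv⟩, rfl⟩

/- Writing `x = m / n` in lowest terms, `mn(m² + Dn²)` is a square, and the greatest common divisor
of the two factors `mn` and `m² + Dn²` divides `D`. -/
lemma exists_squarefree_dvd_of_sq_eq_cube_add {D : ℤ} {x y : ℚ} (h : y ^ 2 = x ^ 3 + D * x) :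
    ∃ (d : ℤ) (r : ℚ), Squarefree d ∧ d ∣ D ∧ x = d * r ^ 2 := by
  obtain ⟨m, n, hmn, hn, hx⟩ : ∃ m n : ℤ, IsCoprime m n ∧ (n : ℚ) ≠ 0 ∧ x * n = m :=
    ⟨x.num, x.den, x.isCoprime_num_den, mod_cast x.den_nz, mod_cast Rat.mul_den_eq_num x⟩
  have hyn : (y * n ^ 2) ^ 2 = ((m * n * (m ^ 2 + D * n ^ 2) : ℤ) : ℚ) := by
    push_cast; rw [← hx]; linear_combination (n : ℚ) ^ 4 * h
  obtain ⟨b, hb⟩ := exists_int_eq_of_sq_eq hyn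
  have hprod : m * n * (m ^ 2 + D * n ^ 2) = b ^ 2 := by
    rw [hb] at hyn; exact_mod_cast hyn.symm
  obtain ⟨d, k, hd, hdv, hdk⟩ := exists_squarefree_dvd_of_mul_eq_sq hprod
  have hcop : IsCoprime d n := by
    refine IsCoprime.of_isCoprime_of_dvd_left ?_ hdv
    rw [show m ^ 2 + D * n ^ 2 = m ^ 2 + D * n * n by ring, IsCoprime.add_mul_right_left_iff]
    exact hmn.pow_left
  have hdm : d ∣ m := by
    have hmn_sq : d ∣ m * n := ⟨k ^ 2, hdk⟩
    exact hcop.dvd_of_dvd_mul_right hmn_sq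
  have hdD : d ∣ D * n ^ 2 := (dvd_add_right (dvd_pow hdm two_ne_zero)).mp hdv
  refine ⟨d, k / n, hd, hcop.pow_right.dvd_of_dvd_mul_right hdD, ?_⟩
  have hdk' : (m * n : ℚ) = d * k ^ 2 := by exact_mod_cast hdk
  field_simp
  rw [← hdk', ← hx]
  ring

lemma exists_eq_sq_or_eq_prime_mul_sq {p : ℕ} (hp : p.Prime) {x y : ℚ}
    (h : y ^ 2 = x ^ 3 + p * x) : ∃ r : ℚ, x = r ^ 2 ∨ x = p * r ^ 2 := by
  obtain ⟨d, r, -, hdp, rfl⟩ := exists_squarefree_dvd_of_sq_eq_cube_add (D := p) (mod_cast h)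
  rcases eq_or_ne r 0 with rfl | hr
  · exact ⟨0, by simp⟩
  have hp0 : (0 : ℚ) < p := by exact_mod_cast hp.pos
  have hd : 0 ≤ d := by
    have hx : 0 ≤ (d : ℚ) * r ^ 2 :=
      nonneg_of_mul_nonneg_left (b := ((d : ℚ) * r ^ 2) ^ 2 + p)
        (by linarith [sq_nonneg y]) (by positivity)
    exact_mod_cast nonneg_of_mul_nonneg_left hx (by positivity)
  lift d to ℕ using hd
  rcases (Nat.dvd_prime hp).mp (mod_cast hdp) with rfl | rfl <;> exact ⟨r, by simp⟩

lemma exists_dvd_two_of_sq_eq_pow_four_add {p : ℕ} (hp : p.Prime) {r s : ℚ}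
    (h : s ^ 2 = r ^ 4 + p) :
    ∃ (d : ℤ) (w : ℚ), d ∣ 2 ∧ (2 * (r ^ 2 + s) = d * w ^ 2 ∨ 2 * (r ^ 2 - s) = d * w ^ 2) := by
  have hp0 : (p : ℚ) ≠ 0 := by exact_mod_cast hp.ne_zero
  have hpZ : Prime (p : ℤ) := Nat.prime_iff_prime_int.mp hp
  obtain ⟨d, w, hd, hd4p, hX⟩ := exists_squarefree_dvd_of_sq_eq_cube_add (D := -4 * p)
    (x := 2 * (r ^ 2 + s)) (y := 2 * r * (2 * (r ^ 2 + s)))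
    (by push_cast; linear_combination -8 * (r ^ 2 + s) * h)
  have hd2p : d ∣ 2 * p := (hd.dvd_pow_iff_dvd two_ne_zero).mp (hd4p.trans ⟨-p, by ring⟩)
  by_cases hpd : (p : ℤ) ∣ d
  · obtain ⟨e, rfl⟩ := hpd
    have he : e ∣ 2 := Int.dvd_of_mul_dvd_mul_left hpZ.ne_zero (by rwa [mul_comm (p : ℤ) 2])
    have hprod : 2 * (r ^ 2 + s) * (2 * (r ^ 2 - s)) = -4 * p := by linear_combination -4 * h
    rw [hX] at hprod
    push_cast at hprod
    have he0 : (e : ℚ) ≠ 0 := by rintro h0; simp [h0, hp0] at hprod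
    have hw0 : w ≠ 0 := by rintro rfl; simp [hp0] at hprod
    have hconj : e * w ^ 2 * (2 * (r ^ 2 - s)) = -4 :=
      mul_left_cancel₀ hp0 (by linear_combination hprod)
    refine ⟨-e, 2 / (e * w), neg_dvd.mpr he, Or.inr ?_⟩
    push_cast
    field_simp
    linear_combination hconj / 2
  · have hcop : IsCoprime d p := ((Prime.coprime_iff_not_dvd hpZ).mpr hpd).symm
    exact ⟨d, w, hcop.dvd_of_dvd_mul_right hd2p, Or.inl hX⟩

lemma exists_isCoprime_mul_pow_four_eq {N t : ℤ} (ht : Squarefree t) {w u : ℚ}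
    (h : (N : ℚ) = w ^ 4 - t * u ^ 2) :
    ∃ a b c : ℤ, IsCoprime a c ∧ N * c ^ 4 = a ^ 4 - t * b ^ 2 := by
  have hw : w * w.den = w.num := Rat.mul_den_eq_num w
  have hb : (t : ℚ) * (w.den ^ 2 * u) ^ 2 = ((w.num ^ 4 - N * w.den ^ 4 : ℤ) : ℚ) := by
    push_cast
    rw [← hw, h]; ring
  obtain ⟨b, hbu⟩ := exists_int_eq_of_squarefree_mul_sq_eq ht hb
  rw [hbu] at hb
  have hb' : t * b ^ 2 = w.num ^ 4 - N * w.den ^ 4 := by exact_mod_cast hb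
  exact ⟨w.num, b, w.den, w.isCoprime_num_den, by linear_combination hb'⟩

lemma pow_four_modEq_one_of_odd {a : ℤ} (ha : Odd a) : a ^ 4 ≡ 1 [ZMOD 16] := by
  obtain ⟨k, hk⟩ := Int.eight_dvd_sq_sub_one_of_odd ha
  refine (Int.modEq_of_dvd ⟨k * (4 * k + 1), ?_⟩).symm
  linear_combination (a ^ 2 + 1 + 8 * k) * hk

lemma sq_emod_eight (a : ℤ) : a ^ 2 % 8 = 0 ∨ a ^ 2 % 8 = 1 ∨ a ^ 2 % 8 = 4 := by
  have ha : a % 8 = 0 ∨ a % 8 = 1 ∨ a % 8 = 2 ∨ a % 8 = 3 ∨ a % 8 = 4 ∨ a % 8 = 5 ∨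
    a % 8 = 6 ∨ a % 8 = 7 := by omega
  rcases ha with h | h | h | h | h | h | h | h <;> simp [pow_succ, Int.mul_emod, h]

lemma exists_modEq_one_sub_mul_sq {D t : ℤ} (hD : Odd D) (ht : Squarefree t) (hte : Even t)
    {w u : ℚ} (h : (D : ℚ) = w ^ 4 - t * u ^ 2) : ∃ b : ℤ, D ≡ 1 - t * b ^ 2 [ZMOD 16] := by
  obtain ⟨a, b, c, hac, habc⟩ := exists_isCoprime_mul_pow_four_eq ht h
  have hparity : Even c ↔ Even a := by
    have : Even (D * c ^ 4) ↔ Even (a ^ 4) := by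
      rw [habc, Int.even_sub]; simp [hte.mul_right]
    simpa [Int.even_mul, Int.even_pow, Int.not_even_iff_odd.mpr hD] using this
  have ha : Odd a := by
    rw [← Int.not_even_iff_odd]
    intro ha
    exact Int.prime_two.not_isUnit (hac.isUnit_of_dvd' ha.two_dvd (hparity.mpr ha).two_dvd)
  have hc : Odd c := by
    rwa [← Int.not_even_iff_odd, hparity, Int.not_even_iff_odd]
  refine ⟨b, ?_⟩
  calc D = D * 1 := (mul_one D).symm
    _ ≡ D * c ^ 4 [ZMOD 16] := (pow_four_modEq_one_of_odd hc).symm.mul_left D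
    _ = a ^ 4 - t * b ^ 2 := habc
    _ ≡ 1 - t * b ^ 2 [ZMOD 16] := (pow_four_modEq_one_of_odd ha).sub_right _

lemma emod_sixteen_of_eq_pow_four_sub_two_mul_sq {D : ℤ} (hD : Odd D) {w u : ℚ}
    (h : (D : ℚ) = w ^ 4 - 2 * u ^ 2) : D % 16 = 1 ∨ D % 16 = 9 ∨ D % 16 = 15 := by
  obtain ⟨b, hb⟩ := exists_modEq_one_sub_mul_sq hD Int.prime_two.squarefree even_two
    (mod_cast h)
  have := sq_emod_eight b
  rw [Int.ModEq] at hb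
  omega

lemma emod_sixteen_of_eq_pow_four_add_two_mul_sq {D : ℤ} (hD : Odd D) {w u : ℚ}
    (h : (D : ℚ) = w ^ 4 + 2 * u ^ 2) : D % 16 = 1 ∨ D % 16 = 3 ∨ D % 16 = 9 := by
  have hsqf : Squarefree (-2 : ℤ) :=
    Int.prime_two.squarefree.squarefree_of_dvd (neg_dvd.mpr dvd_rfl)
  obtain ⟨b, hb⟩ := exists_modEq_one_sub_mul_sq hD hsqf even_two.neg (w := w) (u := u)
    (by push_cast; linear_combination h)
  have := sq_emod_eight b
  rw [Int.ModEq] at hb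
  omega

lemma even_and_even_of_four_dvd_sq_add_sq {a b : ℤ} (h : 4 ∣ a ^ 2 + b ^ 2) :
    Even a ∧ Even b := by
  obtain ⟨k, hk⟩ := Int.even_or_odd' a
  obtain ⟨l, hl⟩ := Int.even_or_odd' b
  rcases hk with rfl | rfl <;> rcases hl with rfl | rfl <;> ring_nf at h <;> grind

lemma emod_four_of_four_mul_eq_pow_four_add_sq {D : ℤ} (hD : Odd D) {w v : ℚ}
    (h : 4 * (D : ℚ) = w ^ 4 + v ^ 2) : D % 4 = 1 := by
  obtain ⟨a, b, c, hac, habc⟩ := exists_isCoprime_mul_pow_four_eq (N := 4 * D) (t := -1)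
    isUnit_neg_one.squarefree (w := w) (u := v) (by push_cast; linear_combination h)
  obtain ⟨ha, hb⟩ : Even (a ^ 2) ∧ Even b :=
    even_and_even_of_four_dvd_sq_add_sq ⟨D * c ^ 4, by linear_combination -habc⟩
  obtain ⟨a', rfl⟩ := ((Int.even_pow.mp ha).1).two_dvd
  obtain ⟨b', rfl⟩ := hb.two_dvd
  have hc : Odd c := by
    rw [← Int.not_even_iff_odd]
    exact fun hc => Int.prime_two.not_isUnit (hac.isUnit_of_dvd' (dvd_mul_right 2 a') hc.two_dvd)
  have hDc : D * c ^ 4 = 4 * a' ^ 4 + b' ^ 2 := by linarith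
  have hDb : D ≡ b' ^ 2 [ZMOD 4] :=
    calc D = D * 1 := (mul_one D).symm
      _ ≡ D * c ^ 4 [ZMOD 4] :=
        (((pow_four_modEq_one_of_odd hc).of_dvd (by norm_num)).symm).mul_left D
      _ = b' ^ 2 + 4 * a' ^ 4 := by rw [hDc, add_comm]
      _ ≡ b' ^ 2 [ZMOD 4] := Int.add_modulus_mul_modEq_iff.mpr rfl
  have := sq_emod_eight b'
  rw [Int.ModEq] at hDb
  rw [Int.odd_iff] at hD
  omega

end Arithmetic

section Quotient

variable {G : Type*} [AddCommGroup G]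

lemma mem_twoSub_iff {x : G} : x ∈ twoSub G ↔ ∃ y, y + y = x := by
  simp [twoSub, AddMonoidHom.mem_range, two_nsmul]

lemma add_self_mem_twoSub (x : G) : x + x ∈ twoSub G := mem_twoSub_iff.mpr ⟨x, rfl⟩

lemma finite_and_card_quotient_twoSub_le_of_cover {ι : Type*} [Finite ι] {A : ι → Set G}
    (hcover : ∀ x, ∃ i, x ∈ A i) (hadd : ∀ i, ∀ x ∈ A i, ∀ y ∈ A i, x + y ∈ twoSub G) :
    Finite (G ⧸ twoSub G) ∧ Nat.card (G ⧸ twoSub G) ≤ Nat.card ι := by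
  choose i hi using hcover
  have hinj : Function.Injective fun q : G ⧸ twoSub G => i q.out := by
    intro q q' (hqq' : i q.out = i q'.out)
    rw [← QuotientAddGroup.out_eq' q, ← QuotientAddGroup.out_eq' q', QuotientAddGroup.eq]
    have hsum := hadd _ _ (hi q.out) _ (hqq' ▸ hi q'.out)
    rw [show -q.out + q'.out = q.out + q'.out - (q.out + q.out) by abel]
    exact sub_mem hsum (add_self_mem_twoSub _)
  exact ⟨Finite.of_injective _ hinj, Nat.card_le_card_of_injective _ hinj⟩

end Quotient

namespace EDcurve

open WeierstrassCurve.Affine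

variable {D : ℚ}

lemma equation_iff {x y : ℚ} : (EDcurve D).Equation x y ↔ y ^ 2 = x ^ 3 + D * x := by
  rw [WeierstrassCurve.Affine.equation_iff]; simp [EDcurve]

lemma nonsingular_iff (hD : D ≠ 0) {x y : ℚ} :
    (EDcurve D).Nonsingular x y ↔ y ^ 2 = x ^ 3 + D * x := by
  rw [← equation_iff_nonsingular_of_Δ_ne_zero, equation_iff]
  simp [EDcurve, WeierstrassCurve.Δ, WeierstrassCurve.b₂, WeierstrassCurve.b₄,
    WeierstrassCurve.b₆, WeierstrassCurve.b₈, hD]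

lemma sq_eq_pow_four_add {r s : ℚ} (hr : r ≠ 0)
    (h : (EDcurve D).Nonsingular (r ^ 2) (r * s)) : s ^ 2 = r ^ 4 + D :=
  mul_left_cancel₀ (pow_ne_zero 2 hr) (by linear_combination equation_iff.mp h.1)

lemma exists_some_eq_of_eq {x y x' y' : ℚ} (h : (EDcurve D).Nonsingular x y) (hx : x = x')
    (hy : y = y') : ∃ h' : (EDcurve D).Nonsingular x' y', Point.some x y h = .some x' y' h' := by
  subst hx hy
  exact ⟨h, rfl⟩

/-- The rational 2-torsion point `(0, 0)`; adding it exchanges the classes `1` and `D` of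
`x`-coordinates modulo squares. -/
def torsionPoint (hD : D ≠ 0) : (EDcurve D).Point :=
  .some 0 0 ((nonsingular_iff hD).mpr (by ring))

lemma torsionPoint_add_self (hD : D ≠ 0) : torsionPoint hD + torsionPoint hD = 0 :=
  Point.add_of_Y_eq rfl (by simp [negY, EDcurve])

lemma exists_some_add_torsionPoint (hD : D ≠ 0) {x y : ℚ} (h : (EDcurve D).Nonsingular x y)
    (hx : x ≠ 0) : ∃ (y' : ℚ) (h' : (EDcurve D).Nonsingular (D / x) y'),
      Point.some x y h + torsionPoint hD = .some (D / x) y' h' := by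
  have hslope : (y / x) ^ 2 - x = D / x := by
    field_simp
    linear_combination equation_iff.mp h.1
  have hX : (EDcurve D).addX x 0 ((EDcurve D).slope x 0 y 0) = D / x := by
    rw [slope_of_X_ne hx, ← hslope]
    simp only [addX, EDcurve]
    ring
  rw [torsionPoint, Point.add_of_X_ne hx]
  exact ⟨_, exists_some_eq_of_eq _ hX rfl⟩

/- With `X = w(w + 2r) / 2`, the point to be halved is twice `(X, wX)`: the tangent there has slope
`w + r`. -/
lemma some_mem_twoSub (hD : D ≠ 0) {r s w : ℚ} (hr : r ≠ 0)
    (h : (EDcurve D).Nonsingular (r ^ 2) (r * s)) (hw : 2 * (r ^ 2 + s) = w ^ 2) :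
    Point.some _ _ h ∈ twoSub (EDcurve D).Point := by
  obtain rfl : s = w ^ 2 / 2 - r ^ 2 := by linear_combination hw / 2
  have hDw : D = w ^ 4 / 4 - w ^ 2 * r ^ 2 := by linear_combination -sq_eq_pow_four_add hr h
  have hw0 : w ≠ 0 := by rintro rfl; exact hD (by rw [hDw]; ring)
  obtain ⟨X, hX⟩ : ∃ X, X = w * (w + 2 * r) / 2 := ⟨_, rfl⟩
  have hXD : X ^ 2 + D = w ^ 2 * X := by rw [hX, hDw]; ring
  have hX0 : X ≠ 0 := by rintro rfl; exact hD (by linear_combination hXD)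
  have hQ : (EDcurve D).Nonsingular X (w * X) :=
    (nonsingular_iff hD).mpr (by linear_combination -X * hXD)
  have hne : w * X ≠ (EDcurve D).negY X (w * X) := by
    simp only [negY, EDcurve]
    exact fun h0 => mul_ne_zero hw0 hX0 (by linear_combination h0 / 2)
  have hslope : (EDcurve D).slope X X (w * X) (w * X) = w + r := by
    rw [slope_of_Y_ne rfl hne, div_eq_iff (sub_ne_zero.mpr hne)]
    simp only [negY, EDcurve]
    linear_combination hXD + 2 * X * hX
  refine mem_twoSub_iff.mpr ⟨.some _ _ hQ, ?_⟩
  rw [Point.add_self_of_Y_ne hne]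
  refine (exists_some_eq_of_eq _ ?_ ?_).choose_spec
  · rw [hslope]; simp only [addX, EDcurve]; rw [hX]; ring
  · rw [hslope]; simp only [addX, addY, negAddY, negY, EDcurve]; rw [hX]; ring

/- The third point on the line through the two given ones has `x`-coordinate `r₃²`. -/
lemma exists_third_point {K : Type*} [Field K] {D r₁ s₁ r₂ s₂ : K}
    (h₁ : s₁ ^ 2 = r₁ ^ 4 + D) (h₂ : s₂ ^ 2 = r₂ ^ 4 + D) (hr : r₁ ^ 2 ≠ r₂ ^ 2) :
    ∃ r₃ l : K, l = (r₁ * s₁ - r₂ * s₂) / (r₁ ^ 2 - r₂ ^ 2) ∧ l ^ 2 = r₁ ^ 2 + r₂ ^ 2 + r₃ ^ 2 ∧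
      s₁ = l * r₁ - r₂ * r₃ ∧ s₂ = l * r₂ - r₁ * r₃ := by
  have hr' : r₁ ^ 2 - r₂ ^ 2 ≠ 0 := sub_ne_zero.mpr hr
  refine ⟨(r₂ * s₁ - r₁ * s₂) / (r₁ ^ 2 - r₂ ^ 2), _, rfl, ?_, ?_, ?_⟩
  · field_simp
    linear_combination (r₁ ^ 2 - r₂ ^ 2) * (h₁ - h₂)
  · field_simp
    ring
  · field_simp
    ring

lemma exists_some_add_some {r₁ s₁ r₂ s₂ : ℚ} (hr₁ : r₁ ≠ 0) (hr₂ : r₂ ≠ 0)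
    (h₁ : (EDcurve D).Nonsingular (r₁ ^ 2) (r₁ * s₁))
    (h₂ : (EDcurve D).Nonsingular (r₂ ^ 2) (r₂ * s₂)) (hr : r₁ ^ 2 ≠ r₂ ^ 2) :
    ∃ r₃ l : ℚ, l ^ 2 = r₁ ^ 2 + r₂ ^ 2 + r₃ ^ 2 ∧
      s₁ = l * r₁ - r₂ * r₃ ∧ s₂ = l * r₂ - r₁ * r₃ ∧
      ∃ h₃ : (EDcurve D).Nonsingular (r₃ ^ 2) (r₃ * (r₁ * r₂ - l * r₃)),
        Point.some _ _ h₁ + Point.some _ _ h₂ = .some _ _ h₃ := by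
  obtain ⟨r₃, l, hl, hlsq, hs₁, hs₂⟩ :=
    exists_third_point (sq_eq_pow_four_add hr₁ h₁) (sq_eq_pow_four_add hr₂ h₂) hr
  have hslope : (EDcurve D).slope (r₁ ^ 2) (r₂ ^ 2) (r₁ * s₁) (r₂ * s₂) = l := by
    rw [slope_of_X_ne hr, hl]
  refine ⟨r₃, l, hlsq, hs₁, hs₂, ?_⟩
  rw [Point.add_of_X_ne hr]
  refine exists_some_eq_of_eq _ ?_ ?_
  · rw [hslope]; simp only [addX, EDcurve]; linear_combination hlsq
  · rw [hslope]; simp only [addX, addY, negAddY, negY, EDcurve]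
    linear_combination -l * hlsq - r₁ * hs₁

/- Put `m = r₁ + r₂ + r₃ + l`. Then `2(r₁² + s₁) = m(l + r₁ - r₂ - r₃)` and
`2(r₂² + s₂) = m(l + r₂ - r₁ - r₃)`, so the product of the two is `m²` times `2(r₃² + s₃)` for the
sum `(r₃², r₃s₃)`. -/
lemma some_add_some_mem_twoSub (hD : ¬IsSquare D) {d r₁ s₁ w₁ r₂ s₂ w₂ : ℚ}
    (hr₁ : r₁ ≠ 0) (h₁ : (EDcurve D).Nonsingular (r₁ ^ 2) (r₁ * s₁))
    (hw₁ : 2 * (r₁ ^ 2 + s₁) = d * w₁ ^ 2)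
    (hr₂ : r₂ ≠ 0) (h₂ : (EDcurve D).Nonsingular (r₂ ^ 2) (r₂ * s₂))
    (hw₂ : 2 * (r₂ ^ 2 + s₂) = d * w₂ ^ 2) (hr : r₁ ^ 2 ≠ r₂ ^ 2) :
    Point.some _ _ h₁ + Point.some _ _ h₂ ∈ twoSub (EDcurve D).Point := by
  have hD0 : D ≠ 0 := by rintro rfl; exact hD IsSquare.zero
  have hs₁D := sq_eq_pow_four_add hr₁ h₁
  obtain ⟨r₃, l, hl, hs₁, hs₂, h₃, hsum⟩ := exists_some_add_some hr₁ hr₂ h₁ h₂ hr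
  have hr₃ : r₃ ≠ 0 := by
    rintro rfl
    refine hD ⟨r₁ * r₂, ?_⟩
    rw [hs₁] at hs₁D
    linear_combination -hs₁D + r₁ ^ 2 * hl
  obtain ⟨m, hm⟩ : ∃ m, m = r₁ + r₂ + r₃ + l := ⟨_, rfl⟩
  have hm₁ : 2 * (r₁ ^ 2 + s₁) = m * (l + r₁ - r₂ - r₃) := by
    rw [hm, hs₁]; linear_combination -hl
  have hm₂ : 2 * (r₂ ^ 2 + s₂) = m * (l + r₂ - r₁ - r₃) := by
    rw [hm, hs₂]; linear_combination -hl
  have hm0 : m ≠ 0 := by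
    intro h0
    obtain rfl : s₁ = -r₁ ^ 2 := by rw [h0] at hm₁; linear_combination hm₁ / 2
    exact hD0 (by linear_combination -hs₁D)
  rw [hsum]
  refine some_mem_twoSub hD0 hr₃ h₃ (w := d * w₁ * w₂ / m) ?_
  calc 2 * (r₃ ^ 2 + (r₁ * r₂ - l * r₃))
      = (l + r₁ - r₂ - r₃) * (l + r₂ - r₁ - r₃) := by linear_combination -hl
    _ = 2 * (r₁ ^ 2 + s₁) * (2 * (r₂ ^ 2 + s₂)) / m ^ 2 := by rw [hm₁, hm₂]; field_simp
    _ = (d * w₁ * w₂ / m) ^ 2 := by rw [hw₁, hw₂]; ring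

/-- The image under the dual isogeny `E' → E`, where `E' : Y² = X³ - 4DX`, of the rational points
of `E'` with `X` in `d` times the squares, the point at infinity having class `1`. The affine point
`(r², rs)` is the image of the point of `E'` with `X = 2(r² + s)` and `Y = 2rX`. -/
def descentClass (D d : ℚ) : Set (EDcurve D).Point :=
  {P | P = 0 ∧ IsSquare d ∨ ∃ (r s w : ℚ) (h : (EDcurve D).Nonsingular (r ^ 2) (r * s)),
    r ≠ 0 ∧ P = .some _ _ h ∧ 2 * (r ^ 2 + s) = d * w ^ 2}

lemma mem_twoSub_of_mem_descentClass (hD : D ≠ 0) {d : ℚ} (hd : IsSquare d)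
    {P : (EDcurve D).Point} (hP : P ∈ descentClass D d) : P ∈ twoSub (EDcurve D).Point := by
  obtain ⟨e, rfl⟩ := hd
  rcases hP with ⟨rfl, -⟩ | ⟨r, s, w, h, hr, rfl, hw⟩
  · exact zero_mem _
  · exact some_mem_twoSub hD hr h (w := e * w) (by rw [hw]; ring)

lemma add_mem_twoSub_of_mem_descentClass (hD : ¬IsSquare D) {d : ℚ} {P Q : (EDcurve D).Point}
    (hP : P ∈ descentClass D d) (hQ : Q ∈ descentClass D d) :
    P + Q ∈ twoSub (EDcurve D).Point := by
  by_cases hd : IsSquare d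
  · have hD0 : D ≠ 0 := by rintro rfl; exact hD IsSquare.zero
    exact add_mem (mem_twoSub_of_mem_descentClass hD0 hd hP)
      (mem_twoSub_of_mem_descentClass hD0 hd hQ)
  obtain ⟨r₁, s₁, w₁, h₁, hr₁, rfl, hw₁⟩ := hP.resolve_left fun h => hd h.2
  obtain ⟨r₂, s₂, w₂, h₂, hr₂, rfl, hw₂⟩ := hQ.resolve_left fun h => hd h.2
  by_cases hr : r₁ ^ 2 = r₂ ^ 2
  · rcases Y_eq_of_X_eq h₁.1 h₂.1 hr with hy | hy
    · obtain ⟨_, heq⟩ := exists_some_eq_of_eq h₁ hr hy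
      rw [heq]
      exact add_self_mem_twoSub _
    · rw [Point.add_of_Y_eq hr hy]
      exact zero_mem _
  · exact some_add_some_mem_twoSub hD hr₁ h₁ hw₁ hr₂ h₂ hw₂ hr

lemma exists_quartic_of_descentClass_nonempty {d : ℚ} (hd : ¬IsSquare d)
    (h : (descentClass D d).Nonempty) : ∃ w u : ℚ, 4 * D = d * (d * w ^ 4 - 4 * u ^ 2) := by
  obtain ⟨P, hP⟩ := h
  obtain ⟨r, s, w, hrs, hr, -, hw⟩ := hP.resolve_left fun h => hd h.2
  obtain rfl : s = d * w ^ 2 / 2 - r ^ 2 := by linear_combination hw / 2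
  exact ⟨w, r * w, by linear_combination -4 * sq_eq_pow_four_add hr hrs⟩

lemma emod_of_descentClass_nonempty {n d : ℤ} (hn : Odd n) (hd : d ∣ 2)
    (h : (descentClass (n : ℚ) d).Nonempty) :
    d = 1 ∨ d = -1 ∧ n % 4 = 1 ∨ d = 2 ∧ (n % 16 = 1 ∨ n % 16 = 9 ∨ n % 16 = 15) ∨
      d = -2 ∧ (n % 16 = 1 ∨ n % 16 = 3 ∨ n % 16 = 9) := by
  obtain rfl | rfl | rfl | rfl : d = 1 ∨ d = -1 ∨ d = 2 ∨ d = -2 := by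
    rcases (Nat.dvd_prime Nat.prime_two).mp (Int.natAbs_dvd_natAbs.mpr hd) with h | h <;> omega
  · simp
  · obtain ⟨w, u, hwu⟩ := exists_quartic_of_descentClass_nonempty (by norm_num) h
    have := emod_four_of_four_mul_eq_pow_four_add_sq hn (w := w) (v := 2 * u)
      (by rw [hwu]; push_cast; ring)
    simp [this]
  · obtain ⟨w, u, hwu⟩ := exists_quartic_of_descentClass_nonempty (by norm_num) h
    have := emod_sixteen_of_eq_pow_four_sub_two_mul_sq hn (w := w) (u := u)
      (by push_cast at hwu; linear_combination hwu / 4)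
    simp [this]
  · obtain ⟨w, u, hwu⟩ := exists_quartic_of_descentClass_nonempty (by norm_num) h
    have := emod_sixteen_of_eq_pow_four_add_two_mul_sq hn (w := w) (u := u)
      (by push_cast at hwu; linear_combination hwu / 4)
    simp [this]

section Prime

variable {p : ℕ}

lemma exists_some_sq_mem_descentClass (hp : p.Prime) {r y : ℚ} (hr : r ≠ 0)
    (h : (EDcurve p).Nonsingular (r ^ 2) y) :
    ∃ d : ℤ, d ∣ 2 ∧ Point.some _ _ h ∈ descentClass p d := by
  obtain ⟨s, rfl⟩ : ∃ s, y = r * s := ⟨y / r, by field_simp⟩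
  obtain ⟨d, w, hd, hw | hw⟩ := exists_dvd_two_of_sq_eq_pow_four_add hp (sq_eq_pow_four_add hr h)
  · exact ⟨d, hd, Or.inr ⟨r, s, w, h, hr, rfl, hw⟩⟩
  · obtain ⟨h', heq⟩ := exists_some_eq_of_eq h (neg_sq r).symm (neg_mul_neg r s).symm
    exact ⟨d, hd, Or.inr ⟨-r, -s, w, h', neg_ne_zero.mpr hr, heq, by rw [← hw]; ring⟩⟩

lemma exists_add_torsionPoint_mem_descentClass (hp : p.Prime) (P : (EDcurve p).Point) :
    ∃ (i : Fin 2) (d : ℤ), d ∣ 2 ∧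
      P + (i : ℕ) • torsionPoint (Nat.cast_ne_zero.mpr hp.ne_zero) ∈ descentClass p d := by
  have hp0 : (p : ℚ) ≠ 0 := Nat.cast_ne_zero.mpr hp.ne_zero
  have hzero : (0 : (EDcurve p).Point) ∈ descentClass p (1 : ℤ) := Or.inl ⟨rfl, by simp⟩
  rcases P with _ | ⟨x, y, h⟩
  · exact ⟨0, 1, one_dvd 2, by rw [← Point.zero_def]; simpa using hzero⟩
  have hxy := equation_iff.mp h.1
  rcases eq_or_ne x 0 with rfl | hx
  · obtain rfl : y = 0 := by simpa using hxy
    exact ⟨1, 1, one_dvd 2, by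
      rw [Fin.val_one, one_nsmul]
      exact (torsionPoint_add_self hp0).symm ▸ hzero⟩
  obtain ⟨r, rfl | rfl⟩ := exists_eq_sq_or_eq_prime_mul_sq hp hxy
  · obtain ⟨d, hd, hP⟩ := exists_some_sq_mem_descentClass hp (by simpa using hx) h
    exact ⟨0, d, hd, by simpa using hP⟩
  · have hr : r ≠ 0 := by rintro rfl; simp at hx
    obtain ⟨y', h', hsum⟩ := exists_some_add_torsionPoint hp0 h hx
    obtain ⟨h'', heq⟩ := exists_some_eq_of_eq h' (x' := r⁻¹ ^ 2) (by field_simp) rfl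
    obtain ⟨d, hd, hP⟩ := exists_some_sq_mem_descentClass hp (inv_ne_zero hr) h''
    exact ⟨1, d, hd, by rwa [Fin.val_one, one_nsmul, hsum, heq]⟩

lemma finite_and_card_quotient_twoSub_le (hp : p.Prime) {S : Finset ℤ}
    (hS : ∀ d : ℤ, d ∣ 2 → (descentClass p d).Nonempty → d ∈ S) :
    Finite ((EDcurve p).Point ⧸ twoSub (EDcurve p).Point) ∧
      Nat.card ((EDcurve p).Point ⧸ twoSub (EDcurve p).Point) ≤ 2 * S.card := by
  have hp0 : (p : ℚ) ≠ 0 := by exact_mod_cast hp.ne_zero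
  have hsq : ¬IsSquare (p : ℚ) := by
    rw [Rat.isSquare_natCast_iff]
    exact hp.prime.not_isSquare
  have hcard : Nat.card (Fin 2 × S) = 2 * S.card := by simp
  rw [← hcard]
  refine finite_and_card_quotient_twoSub_le_of_cover
    (A := fun i : Fin 2 × S => {P | P + (i.1 : ℕ) • torsionPoint hp0 ∈ descentClass p (i.2 : ℤ)})
    (fun P => ?_) (fun i P hP Q hQ => ?_)
  · obtain ⟨i, d, hd, hP⟩ := exists_add_torsionPoint_mem_descentClass hp P
    exact ⟨(i, ⟨d, hS d hd ⟨_, hP⟩⟩), hP⟩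
  · have hsum := sub_mem (add_mem_twoSub_of_mem_descentClass hsq hP hQ)
      (add_self_mem_twoSub ((i.1 : ℕ) • torsionPoint hp0))
    rwa [add_add_add_comm, add_sub_cancel_right] at hsum

end Prime

end EDcurve

/-- For an odd prime `p`, the group `E_p(ℚ)/2E_p(ℚ)` for `E_p : y² = x³ + p·x` is
finite, of order at most `2` if `p ≡ 7, 11 (mod 16)`, at most `4` if `p ≡ 3, 5, 13, 15 (mod 16)`,
and at most `8` if `p ≡ 1, 9 (mod 16)`. -/
theorem stmt18 (p : ℕ) (hp : p.Prime) (hodd : p ≠ 2) :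
    Finite ((EDcurve (p : ℚ)).Point ⧸ twoSub (EDcurve (p : ℚ)).Point) ∧
    ((p % 16 = 7 ∨ p % 16 = 11) →
      Nat.card ((EDcurve (p : ℚ)).Point ⧸ twoSub (EDcurve (p : ℚ)).Point) ≤ 2) ∧
    ((p % 16 = 3 ∨ p % 16 = 5 ∨ p % 16 = 13 ∨ p % 16 = 15) →
      Nat.card ((EDcurve (p : ℚ)).Point ⧸ twoSub (EDcurve (p : ℚ)).Point) ≤ 4) ∧
    ((p % 16 = 1 ∨ p % 16 = 9) →
      Nat.card ((EDcurve (p : ℚ)).Point ⧸ twoSub (EDcurve (p : ℚ)).Point) ≤ 8) := by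
  have hp' : Odd (p : ℤ) := mod_cast hp.odd_of_ne_two hodd
  have hclass (d : ℤ) (hd : d ∣ 2) (hne : (EDcurve.descentClass (p : ℚ) d).Nonempty) :=
    EDcurve.emod_of_descentClass_nonempty hp' hd hne
  have hbound (S : Finset ℤ) := EDcurve.finite_and_card_quotient_twoSub_le hp (S := S)
  refine ⟨(hbound {1, -1, 2, -2} (by grind)).1, fun h => (hbound {1} (by grind)).2, ?_,
    fun _ => (hbound {1, -1, 2, -2} (by grind)).2.trans (by simp)⟩
  rintro (h | h | h | h)
  · exact (hbound {1, -2} (by grind)).2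
  · exact (hbound {1, -1} (by grind)).2
  · exact (hbound {1, -1} (by grind)).2
  · exact (hbound {1, 2} (by grind)).2
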